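/- For every (q,x,y) ∈ ℝ³ and every tangent vector (a,b,c) ∈ ℝ³, one has α_{g(q,x,y)}(Dg(q,x,y)(a,b,c)) = (cos(2q)·b − sin(2q)·c)/(1 + x² + y²), where Dg(q,x,y) is the Fréchet derivative of g at (q,x,y). That is, g pulls back the standard contact form of ℝ⁴ to a positive function times cos(2q) dx − sin(2q) dy. -/

import Mathlib

/-! With the complex coordinates `ζ = w₁ + i w₄` and `z = w₂ + i w₃` on `ℝ⁴`, the contact form is
the real part of the complex form `ω = ζ dz - z dζ`, and `g = λ k` for the complex scalar
`λ = (1 + x² + y²)^(-1/2) e^{iq}` and `k = (-(x + i y), 1)`. Since `ω` is alternating,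
`ω_{λk}(d(λk)) = λ² ω_k(dk)`: the term in `dλ` contributes a multiple of `ω_k(k) = 0`. As
`ω_k(dk) = dx + i dy`, the pullback is the real part of `e^{2iq} (dx + i dy) / (1 + x² + y²)`,
and no derivative of `λ` is ever computed. -/

open Real

/-- The standard contact form α of ℝ⁴ evaluated at w:
α_w(v) = w₁v₂ − w₂v₁ + w₃v₄ − w₄v₃. -/
def alpha (w v : EuclideanSpace ℝ (Fin 4)) : ℝ :=
  w 0 * v 1 - w 1 * v 0 + w 2 * v 3 - w 3 * v 2

/-- g(q,x,y) = (1+x²+y²)^(−1/2)·(−x·cos q + y·sin q, cos q, sin q, −x·sin q − y·cos q),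
as a map on ℝ³ = ℝ × ℝ × ℝ. -/
noncomputable def g (w : ℝ × ℝ × ℝ) : EuclideanSpace ℝ (Fin 4) :=
  (Real.sqrt (1 + w.2.1 ^ 2 + w.2.2 ^ 2))⁻¹ •
    (WithLp.equiv 2 (Fin 4 → ℝ)).symm
      ![-w.2.1 * Real.cos w.1 + w.2.2 * Real.sin w.1, Real.cos w.1, Real.sin w.1,
        -w.2.1 * Real.sin w.1 - w.2.2 * Real.cos w.1]

section AlternatingForms

variable {𝕜 A E F M : Type*} [NontriviallyNormedField 𝕜] [NormedCommRing A] [NormedAlgebra 𝕜 A]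
  [NormedAddCommGroup E] [NormedSpace 𝕜 E] [NormedAddCommGroup F] [NormedSpace 𝕜 F]
  [Module A F] [IsBoundedSMul A F] [IsScalarTower 𝕜 A F] [AddCommGroup M] [Module A M]

theorem isAlt_smul_fderiv_smul {B : F →ₗ[A] F →ₗ[A] M} (hB : B.IsAlt) {c : E → A} {k : E → F}
    {p : E} (hc : DifferentiableAt 𝕜 c p) (hk : DifferentiableAt 𝕜 k p) (v : E) :
    B (c p • k p) (fderiv 𝕜 (fun w => c w • k w) p v) = c p ^ 2 • B (k p) (fderiv 𝕜 k p v) := by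
  have product_rule :
      fderiv 𝕜 (fun w => c w • k w) p v = c p • fderiv 𝕜 k p v + fderiv 𝕜 c p v • k p := by
    rw [fderiv_fun_smul hc hk]
    rfl
  simp [product_rule, hB.self_eq_zero, smul_smul, sq]

/-- The determinant of two vectors of `R²` as a bilinear form; for `R = ℂ` it is the form
`ζ dz - z dζ` whose real part is the contact form of `ℝ⁴`. -/
def pairDet (R : Type*) [CommRing R] : R × R →ₗ[R] R × R →ₗ[R] R :=
  LinearMap.mk₂ R (fun v w => v.1 * w.2 - v.2 * w.1)
    (fun u v w => by simp only [Prod.fst_add, Prod.snd_add]; ring)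
    (fun r v w => by simp only [Prod.smul_fst, Prod.smul_snd, smul_eq_mul]; ring)
    (fun u v w => by simp only [Prod.fst_add, Prod.snd_add]; ring)
    (fun r v w => by simp only [Prod.smul_fst, Prod.smul_snd, smul_eq_mul]; ring)

theorem pairDet_apply {R : Type*} [CommRing R] (v w : R × R) :
    pairDet R v w = v.1 * w.2 - v.2 * w.1 := rfl

theorem pairDet_isAlt (R : Type*) [CommRing R] : (pairDet R).IsAlt := fun v => by
  rw [pairDet_apply, mul_comm, sub_self]

theorem pairDet_smul_fderiv_smul_prodMk_one {c f : E → A} {p : E}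
    (hc : DifferentiableAt 𝕜 c p) (hf : DifferentiableAt 𝕜 f p) (v : E) :
    pairDet A (c p • (f p, 1)) (fderiv 𝕜 (fun w => c w • (f w, (1 : A))) p v) =
      -(c p ^ 2 * fderiv 𝕜 f p v) := by
  have hone := differentiableAt_const (𝕜 := 𝕜) (x := p) (1 : A)
  rw [isAlt_smul_fderiv_smul (pairDet_isAlt A) hc (hf.prodMk hone), hf.fderiv_prodMk hone]
  simp [pairDet_apply]

end AlternatingForms

/-- The identification of `ℂ²` with `ℝ⁴` sending `(ζ, z)` to `(Re ζ, Re z, Im z, Im ζ)`. This order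
of the coordinates makes `alpha` the real part of a complex bilinear form. -/
noncomputable def realCoords : ℂ × ℂ →L[ℝ] EuclideanSpace ℝ (Fin 4) :=
  LinearMap.toContinuousLinearMap
    { toFun := fun v => !₂[v.1.re, v.2.re, v.2.im, v.1.im]
      map_add' := fun v w => by ext i; fin_cases i <;> simp
      map_smul' := fun r v => by ext i; fin_cases i <;> simp }

theorem realCoords_apply (v : ℂ × ℂ) : realCoords v = !₂[v.1.re, v.2.re, v.2.im, v.1.im] := rfl

theorem alpha_realCoords (v w : ℂ × ℂ) :
    alpha (realCoords v) (realCoords w) = (pairDet ℂ v w).re := by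
  simp only [alpha, realCoords_apply, pairDet_apply, Matrix.cons_val, Complex.sub_re,
    Complex.mul_re]
  ring

theorem alpha_realCoords_fderiv {E : Type*} [NormedAddCommGroup E] [NormedSpace ℝ E]
    {f : E → ℂ × ℂ} {p : E} (hf : DifferentiableAt ℝ f p) (v : E) :
    alpha (realCoords (f p)) (fderiv ℝ (fun w => realCoords (f w)) p v) =
      (pairDet ℂ (f p) (fderiv ℝ f p v)).re := by
  have chain_rule : fderiv ℝ (fun w => realCoords (f w)) p = realCoords ∘L fderiv ℝ f p :=
    (realCoords.hasFDerivAt.comp p hf.hasFDerivAt).fderiv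
  rw [chain_rule, ContinuousLinearMap.comp_apply, alpha_realCoords]

theorem re_exp_ofReal_mul_I_mul (θ b c : ℝ) :
    (Complex.exp (θ * Complex.I) * (b + c * Complex.I)).re = cos θ * b - sin θ * c := by
  simp [Complex.exp_ofReal_mul_I_re, Complex.exp_ofReal_mul_I_im]

theorem im_exp_ofReal_mul_I_mul (θ b c : ℝ) :
    (Complex.exp (θ * Complex.I) * (b + c * Complex.I)).im = cos θ * c + sin θ * b := by
  simp [Complex.exp_ofReal_mul_I_re, Complex.exp_ofReal_mul_I_im]

/-- The complex scalar `λ = (1 + x² + y²)^(-1/2) e^{iq}`, which is the second complex coordinate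
of `g`. -/
noncomputable def gScalar (w : ℝ × ℝ × ℝ) : ℂ :=
  (√(1 + w.2.1 ^ 2 + w.2.2 ^ 2))⁻¹ • Complex.exp (w.1 * Complex.I)

/-- The ratio `ζ / z = -(x + i y)` of the two complex coordinates of `g`. -/
noncomputable def gRatio : ℝ × ℝ × ℝ →L[ℝ] ℂ :=
  -((Complex.equivRealProdCLM.symm : ℝ × ℝ →L[ℝ] ℂ) ∘L .snd ℝ ℝ (ℝ × ℝ))

theorem gRatio_apply (w : ℝ × ℝ × ℝ) : gRatio w = -(w.2.1 + w.2.2 * Complex.I) := by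
  simp [gRatio, Complex.equivRealProdCLM_symm_apply]

theorem realCoords_exp_smul_gRatio (w : ℝ × ℝ × ℝ) :
    realCoords (Complex.exp (w.1 * Complex.I) • (gRatio w, 1)) =
      !₂[-w.2.1 * cos w.1 + w.2.2 * sin w.1, cos w.1, sin w.1,
        -w.2.1 * sin w.1 - w.2.2 * cos w.1] := by
  have first_coord : (Complex.exp (w.1 * Complex.I) * gRatio w).re =
      -w.2.1 * cos w.1 + w.2.2 * sin w.1 := by
    rw [gRatio_apply, mul_neg, Complex.neg_re, re_exp_ofReal_mul_I_mul]
    ring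
  have last_coord : (Complex.exp (w.1 * Complex.I) * gRatio w).im =
      -w.2.1 * sin w.1 - w.2.2 * cos w.1 := by
    rw [gRatio_apply, mul_neg, Complex.neg_im, im_exp_ofReal_mul_I_mul]
    ring
  rw [realCoords_apply, Prod.smul_mk, smul_eq_mul, smul_eq_mul, mul_one, first_coord, last_coord,
    Complex.exp_ofReal_mul_I_re, Complex.exp_ofReal_mul_I_im]

theorem g_eq_realCoords : g = fun w => realCoords (gScalar w • (gRatio w, 1)) := by
  funext w
  rw [gScalar, smul_assoc, map_smul, realCoords_exp_smul_gRatio]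
  rfl

theorem gScalar_sq (w : ℝ × ℝ × ℝ) :
    gScalar w ^ 2 = (1 + w.2.1 ^ 2 + w.2.2 ^ 2)⁻¹ • Complex.exp (↑(2 * w.1) * Complex.I) := by
  have double_angle : ((2 : ℕ) : ℂ) * (w.1 * Complex.I) = ↑(2 * w.1) * Complex.I := by
    push_cast
    ring
  rw [gScalar, smul_pow, inv_pow, sq_sqrt (by positivity), ← Complex.exp_nat_mul, double_angle]

theorem differentiable_gScalar : Differentiable ℝ gScalar := by
  intro w
  have radicand : DifferentiableAt ℝ (fun w : ℝ × ℝ × ℝ => 1 + w.2.1 ^ 2 + w.2.2 ^ 2) w := by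
    fun_prop
  have angle : DifferentiableAt ℝ (fun w : ℝ × ℝ × ℝ => (w.1 : ℂ)) w := by
    fun_prop
  exact ((radicand.sqrt (by positivity)).inv (by positivity)).smul (angle.mul_const _).cexp

/-- g pulls back the standard contact form of ℝ⁴ to
(cos(2q) dx − sin(2q) dy)/(1 + x² + y²). -/
theorem g_pullback_contact_form (q x y a b c : ℝ) :
    alpha (g (q, x, y)) (fderiv ℝ g (q, x, y) (a, b, c)) =
      (Real.cos (2 * q) * b - Real.sin (2 * q) * c) / (1 + x ^ 2 + y ^ 2) := by
  let k : ℝ × ℝ × ℝ → ℂ × ℂ := fun w => (gRatio w, 1)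
  have hScalar : DifferentiableAt ℝ gScalar (q, x, y) := differentiable_gScalar _
  have hRatio : DifferentiableAt ℝ gRatio (q, x, y) := gRatio.differentiableAt
  have hk : DifferentiableAt ℝ k (q, x, y) := hRatio.prodMk (differentiableAt_const 1)
  calc alpha (g (q, x, y)) (fderiv ℝ g (q, x, y) (a, b, c))
    _ = (pairDet ℂ (gScalar (q, x, y) • k (q, x, y))
          (fderiv ℝ (fun w => gScalar w • k w) (q, x, y) (a, b, c))).re := by
        rw [g_eq_realCoords]
        exact alpha_realCoords_fderiv (hScalar.smul hk) _
    _ = (gScalar (q, x, y) ^ 2 * (b + c * Complex.I)).re := by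
        rw [pairDet_smul_fderiv_smul_prodMk_one hScalar hRatio, gRatio.fderiv, gRatio_apply,
          mul_neg, neg_neg]
    _ = ((1 + x ^ 2 + y ^ 2)⁻¹ •
          (Complex.exp (↑(2 * q) * Complex.I) * (b + c * Complex.I))).re := by
        rw [gScalar_sq, smul_mul_assoc]
    _ = (Real.cos (2 * q) * b - Real.sin (2 * q) * c) / (1 + x ^ 2 + y ^ 2) := by
        rw [Complex.smul_re, re_exp_ofReal_mul_I_mul, smul_eq_mul, inv_mul_eq_div]
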